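/- (Local drift condition for forward Euler.) Let U satisfy Assumption 1. For every ℓ ∈ ℕ there exist positive constants γ_ℓ, K_ℓ and C_ℓ such that for every stepsize h ∈ (0,1) and every x ∈ ℝ^n with U(x) < h^{−1/2}, the expectation over a standard Gaussian random vector ξ ∼ N(0,I) on ℝ^n satisfies E[ U(x − h∇U(x) + √(2β⁻¹h)·ξ)^ℓ ] ≤ (e^{−γ_ℓ h} + C_ℓ·U(x)²·h²)·U(x)^ℓ + (K_ℓ/γ_ℓ)·(1 − e^{−γ_ℓ h}). -/

import Mathlib

open MeasureTheory Real Filter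
open scoped ENNReal

noncomputable section

abbrev Euc (n : ℕ) := EuclideanSpace ℝ (Fin n)

/-- Second derivative of `U` at `x` as a bilinear form. -/
def D2 {n : ℕ} (U : Euc n → ℝ) (x v w : Euc n) : ℝ :=
  iteratedFDeriv ℝ 2 U x ![v, w]

/-- Laplacian of `U` at `x`. -/
def lapl {n : ℕ} (U : Euc n → ℝ) (x : Euc n) : ℝ :=
  ∑ i, D2 U x (EuclideanSpace.single i 1) (EuclideanSpace.single i 1)

/-- Assumption 1 on the potential `U`. -/
structure Assumption1 (n : ℕ) (β : ℝ) (U : Euc n → ℝ) where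
  smooth : ContDiff ℝ 4 U
  c : ℝ
  d : ℝ
  EB : ℝ
  c_pos : 0 < c
  c_lt : c < β
  d_pos : 0 < d
  one_le : ∀ x, 1 ≤ U x
  quad_growth : ∀ C > (0:ℝ), ∃ E > (0:ℝ), ∀ x, U x > E → C * (1 + ‖x‖ ^ 2) ≤ U x
  driftB : ∀ x, U x > EB → lapl U x ≤ c * ‖gradient U x‖ ^ 2 - d * U x
  hess_lb : ∃ C : ℝ, 0 ≤ C ∧ ∀ x η : Euc n, -C * ‖η‖ ^ 2 ≤ D2 U x η η
  deriv_bound : ∃ C > (0:ℝ), ∀ x,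
    ‖iteratedFDeriv ℝ 4 U x‖ ⊔ ‖iteratedFDeriv ℝ 3 U x‖ ⊔ ‖iteratedFDeriv ℝ 2 U x‖ ⊔
      ‖gradient U x‖ ≤ C * U x

/-- The Gibbs measure with density `Z⁻¹ exp(-β U x)`. -/
def gibbs (n : ℕ) (β : ℝ) (U : Euc n → ℝ) : Measure (Euc n) :=
  volume.withDensity fun x => ENNReal.ofReal (exp (-β * U x) / ∫ y, exp (-β * U y))

/-- Total variation distance, `‖μ - ν‖_TV = 2 sup_A |μ(A) - ν(A)|`. -/
def tvDist {α : Type*} [MeasurableSpace α] (μ ν : Measure α) : ℝ :=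
  2 * ⨆ A : {A : Set α // MeasurableSet A}, |(μ A.1).toReal - (ν A.1).toReal|

/-- Forward Euler transition density `q_h(x,y)`. -/
def eulerDensity (n : ℕ) (β h : ℝ) (U : Euc n → ℝ) (x y : Euc n) : ℝ :=
  (4 * π * β⁻¹ * h) ^ (-(n : ℝ) / 2) *
    exp (-‖y - x + h • gradient U x‖ ^ 2 / (4 * β⁻¹ * h))

/-- MALA acceptance probability `α_h(x,y)`. -/
def accept (n : ℕ) (β h : ℝ) (U : Euc n → ℝ) (x y : Euc n) : ℝ :=
  min 1 ((eulerDensity n β h U y x * exp (-β * U y)) /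
         (eulerDensity n β h U x y * exp (-β * U x)))

/-- One-step MALA transition kernel. -/
def malaKernel (n : ℕ) (β h : ℝ) (U : Euc n → ℝ) (x : Euc n) : Measure (Euc n) :=
  volume.withDensity (fun y => ENNReal.ofReal (accept n β h U x y * eulerDensity n β h U x y))
  + (1 - ∫⁻ y, ENNReal.ofReal (accept n β h U x y * eulerDensity n β h U x y)) • Measure.dirac x

/-- `k`-step iterate of a transition kernel. -/
def iterKernel {α : Type*} [MeasurableSpace α] (κ : α → Measure α) : ℕ → α → Measure α
  | 0, x => Measure.dirac x
  | k + 1, x => (iterKernel κ k x).bind κ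

/-- The level set `R_h = {x : U(x) < E_⋆ h^{-1/4}}`. -/
def Rset (n : ℕ) (h Estar : ℝ) (U : Euc n → ℝ) : Set (Euc n) :=
  {x | U x < Estar * h ^ (-(1:ℝ) / 4)}

open scoped Classical in
/-- Patched MALA acceptance probability. -/
def acceptBar (n : ℕ) (β h Estar : ℝ) (U : Euc n → ℝ) (x y : Euc n) : ℝ :=
  if x ∈ Rset n h Estar U ∧ y ∈ Rset n h Estar U then accept n β h U x y else 0

/-- One-step patched MALA transition kernel. -/
def patchedKernel (n : ℕ) (β h Estar : ℝ) (U : Euc n → ℝ) (x : Euc n) : Measure (Euc n) :=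
  volume.withDensity
    (fun y => ENNReal.ofReal (acceptBar n β h Estar U x y * eulerDensity n β h U x y))
  + (1 - ∫⁻ y, ENNReal.ofReal (acceptBar n β h Estar U x y * eulerDensity n β h U x y)) •
      Measure.dirac x

/-- Standard Gaussian measure `N(0, I)` on `ℝ^n`. -/
def stdGaussian (n : ℕ) : Measure (Euc n) :=
  volume.withDensity fun ξ => ENNReal.ofReal ((2 * π) ^ (-(n : ℝ) / 2) * exp (-‖ξ‖ ^ 2 / 2))

/-- Forward Euler transition kernel. -/
def eulerKernel (n : ℕ) (β h : ℝ) (U : Euc n → ℝ) (x : Euc n) : Measure (Euc n) :=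
  volume.withDensity fun y => ENNReal.ofReal (eulerDensity n β h U x y)



open scoped RealInnerProductSpace in
theorem stdGaussian_eq' (n : ℕ) : stdGaussian n = ProbabilityTheory.stdGaussian (Euc n) := by
  have hb : (0:ℝ) < (1/2 : ℂ).re := by norm_num
  have key : ∀ t : Euc n, ∫ v : Euc n, Complex.exp (-(1/2:ℂ) * ‖v‖ ^ 2 + Complex.I * ⟪t, v⟫)
      = (((2 * π : ℝ) ^ ((n:ℝ) / 2) : ℝ) : ℂ) * Complex.exp (-‖t‖^2/2) := by
    intro t
    have := GaussianFourier.integral_cexp_neg_mul_sq_norm_add_of_euclideanSpace (ι := Fin n) hb Complex.I t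
    rw [this]
    congr 1
    · rw [Complex.ofReal_cpow (by positivity)]
      simp only [Fintype.card_fin]
      push_cast
      congr 1
      ring
    · rw [Complex.I_sq]; congr 1; ring
  have hpos : (0:ℝ) < 2 * π := by positivity
  have hint : Integrable (fun ξ : Euc n => (2 * π) ^ (-(n : ℝ) / 2) * Real.exp (-‖ξ‖ ^ 2 / 2)) := by
    apply Integrable.const_mul
    have h := GaussianFourier.integrable_cexp_neg_mul_sq_norm_add (V := Euc n) hb 0 0
    have h2 := h.re
    refine h2.congr (Filter.Eventually.of_forall fun v => ?_)
    have : (-(1/2 : ℂ) * ‖v‖ ^ 2 + 0 * ⟪(0 : Euc n), v⟫) = ((-‖v‖^2/2 : ℝ) : ℂ) := by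
      push_cast; ring
    simp only [this]
    rw [← Complex.ofReal_exp]
    exact Complex.ofReal_re _
  have : IsFiniteMeasure (stdGaussian n) := by
    unfold stdGaussian
    exact isFiniteMeasure_withDensity_ofReal hint.2
  apply Measure.ext_of_charFun
  ext t
  rw [ProbabilityTheory.charFun_stdGaussian, charFun_apply, stdGaussian,
    integral_withDensity_eq_integral_toReal_smul (by fun_prop) (by simp)]
  have e : ∀ v : Euc n, (ENNReal.ofReal ((2 * π) ^ (-(n : ℝ) / 2) * Real.exp (-‖v‖ ^ 2 / 2))).toReal •
      Complex.exp (⟪v, t⟫ * Complex.I) = (((2 * π : ℝ) ^ (-(n:ℝ) / 2) : ℝ) : ℂ) *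
        Complex.exp (-(1/2:ℂ) * ‖v‖ ^ 2 + Complex.I * ⟪t, v⟫) := by
    intro v
    rw [ENNReal.toReal_ofReal (by positivity), Complex.real_smul, Complex.exp_add,
      real_inner_comm]
    push_cast
    rw [mul_assoc]
    congr 2
    · congr 1; ring
    · congr 1; ring
  simp_rw [e]
  rw [integral_const_mul, key, ← mul_assoc, ← Complex.ofReal_mul, ← Real.rpow_add hpos]
  simp [neg_div]

instance (n : ℕ) : IsProbabilityMeasure (stdGaussian n) := by
  rw [stdGaussian_eq']; infer_instance

theorem gauss_symm (n : ℕ) (f : Euc n → ℝ) :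
    ∫ ξ, f (-ξ) ∂(stdGaussian n) = ∫ ξ, f ξ ∂(stdGaussian n) := by
  rw [stdGaussian_eq']
  conv_rhs => rw [← ProbabilityTheory.stdGaussian_map (LinearIsometryEquiv.neg ℝ (E := Euc n))]
  rw [MeasurableEmbedding.integral_map]
  · simp
  · exact (LinearIsometryEquiv.neg ℝ (E := Euc n)).toHomeomorph.measurableEmbedding

theorem gauss_exp (n : ℕ) (a : ℝ) :
    Integrable (fun ξ : Euc n => Real.exp (a * ‖ξ‖)) (stdGaussian n) := by
  rw [stdGaussian_eq']
  obtain ⟨C, hC, hi⟩ := ProbabilityTheory.IsGaussian.exists_integrable_exp_sq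
    (ProbabilityTheory.stdGaussian (Euc n))
  refine (hi.const_mul (Real.exp (a^2/(4*C)))).mono' (by fun_prop) (Filter.Eventually.of_forall ?_)
  intro ξ
  rw [Real.norm_eq_abs, abs_of_pos (Real.exp_pos _), ← Real.exp_add]
  apply Real.exp_le_exp.2
  have : a^2/(4*C) + C * ‖ξ‖^2 - a * ‖ξ‖ = (a - 2*C*‖ξ‖)^2/(4*C) := by field_simp; ring
  have : 0 ≤ (a - 2*C*‖ξ‖)^2/(4*C) := by positivity
  linarith

theorem gauss_exp4 (n : ℕ) (a : ℝ) :
    Integrable (fun ξ : Euc n => ‖ξ‖^4 * Real.exp (a * ‖ξ‖)) (stdGaussian n) := by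
  refine ((gauss_exp n (a+1)).const_mul 24).mono' (by fun_prop) (Filter.Eventually.of_forall ?_)
  intro ξ
  rw [Real.norm_eq_abs, abs_of_nonneg (by positivity), add_mul, Real.exp_add]
  have := Real.pow_div_factorial_le_exp ‖ξ‖ (norm_nonneg _) 4
  have h2 : ‖ξ‖^4 ≤ 24 * Real.exp ‖ξ‖ := by
    norm_num [Nat.factorial] at this; linarith
  calc _ ≤ (24 * Real.exp ‖ξ‖) * Real.exp (a * ‖ξ‖) := by gcongr
    _ = _ := by rw [one_mul]; ring

theorem gauss_coord_int (n : ℕ) (i j : Fin n) :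
    Integrable (fun ξ : Euc n => ξ i * ξ j) (stdGaussian n) := by
  have h := gauss_exp n 2
  refine h.mono' (by fun_prop) (Filter.Eventually.of_forall fun ξ => ?_)
  rw [norm_mul]
  have h1 : ‖ξ i‖ ≤ ‖ξ‖ := PiLp.norm_apply_le ξ i
  have h2 : ‖ξ j‖ ≤ ‖ξ‖ := PiLp.norm_apply_le ξ j
  have h3 : ‖ξ‖ ≤ Real.exp ‖ξ‖ := by linarith [Real.add_one_le_exp ‖ξ‖]
  calc _ ≤ Real.exp ‖ξ‖ * Real.exp ‖ξ‖ := by gcongr <;> linarith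
    _ = _ := by rw [← Real.exp_add]; congr 1; ring

theorem gauss_coord (n : ℕ) (i j : Fin n) :
    ∫ ξ : Euc n, ξ i * ξ j ∂(stdGaussian n) = if i = j then 1 else 0 := by
  have h := congrArg (fun B => B (EuclideanSpace.single i 1) (EuclideanSpace.single j 1))
    (ProbabilityTheory.covarianceBilin_stdGaussian (E := Euc n))
  simp only at h
  rw [ProbabilityTheory.covarianceBilin_apply_eq_cov ProbabilityTheory.IsGaussian.memLp_two_id,
    ProbabilityTheory.covariance] at h
  have h0 : ∀ k, ∫ x : Euc n, inner ℝ (EuclideanSpace.single k (1:ℝ)) x ∂(ProbabilityTheory.stdGaussian (Euc n)) = 0 := by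
    intro k
    exact ProbabilityTheory.integral_strongDual_stdGaussian (innerSL ℝ (EuclideanSpace.single k (1:ℝ)))
  rw [h0, h0] at h
  rw [stdGaussian_eq']
  have e : innerSL ℝ (EuclideanSpace.single i (1:ℝ)) (EuclideanSpace.single j (1:ℝ) : Euc n)
      = if i = j then 1 else 0 := by
    change inner ℝ (EuclideanSpace.single i (1:ℝ)) (EuclideanSpace.single j (1:ℝ)) = _
    simp [EuclideanSpace.inner_single_left]
  refine Eq.trans ?_ (h.trans e)
  simp [EuclideanSpace.inner_single_left]

theorem line_iter {n : ℕ} {f : Euc n → ℝ} (hf : ContDiff ℝ 4 f) (y v : Euc n) (t : ℝ) (k : ℕ)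
    (hk : k ≤ 4) :
    iteratedDeriv k (fun s : ℝ => f (y + s • v)) t
      = iteratedFDeriv ℝ k f (y + t • v) (fun _ => v) := by
  have hk' : ((k : ℕ) : WithTop ℕ∞) ≤ 4 := by exact_mod_cast hk
  have h2 : ContDiff ℝ 4 (fun z => f (y + z)) := hf.comp (contDiff_const.add contDiff_id)
  have h := ContinuousLinearMap.iteratedFDeriv_comp_right
    ((ContinuousLinearMap.id ℝ ℝ).smulRight v) h2 t hk'
  rw [iteratedDeriv_eq_iteratedFDeriv]
  have e : (fun s : ℝ => f (y + s • v)) =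
    ((fun z => f (y + z)) ∘ ⇑((ContinuousLinearMap.id ℝ ℝ).smulRight v)) := by
    ext s; simp
  rw [e, h, iteratedFDeriv_comp_add_left]
  simp

theorem line_contDiff {n : ℕ} {f : Euc n → ℝ} (hf : ContDiff ℝ 4 f) (y v : Euc n) :
    ContDiff ℝ 4 (fun s : ℝ => f (y + s • v)) := by
  exact hf.comp (contDiff_const.add (contDiff_id.smul contDiff_const))

theorem line_within {n : ℕ} {f : Euc n → ℝ} (hf : ContDiff ℝ 4 f) (y v : Euc n) (k : ℕ)
    (hk : k ≤ 4) :
    iteratedDerivWithin k (fun s : ℝ => f (y + s • v)) (Set.uIcc 0 1) 0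
      = iteratedFDeriv ℝ k f y (fun _ => v) := by
  have hk' : ((k : ℕ) : WithTop ℕ∞) ≤ 4 := by exact_mod_cast hk
  rw [iteratedDerivWithin_eq_iteratedDeriv, line_iter hf _ _ _ _ hk]
  · simp
  · rw [Set.uIcc_of_le zero_le_one]; exact uniqueDiffOn_Icc zero_lt_one
  · exact ((line_contDiff hf y v).of_le hk').contDiffAt
  · simp

theorem iter_le {n : ℕ} {f : Euc n → ℝ} (z v : Euc n) (k : ℕ) {M : ℝ}
    (h : ‖iteratedFDeriv ℝ k f z‖ ≤ M) :
    iteratedFDeriv ℝ k f z (fun _ => v) ≤ M * ‖v‖ ^ k := by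
  refine (le_abs_self _).trans ?_
  have := (iteratedFDeriv ℝ k f z).le_opNorm (fun _ => v)
  simp only [Finset.prod_const, Finset.card_univ, Fintype.card_fin, Real.norm_eq_abs] at this
  exact this.trans (by gcongr)

theorem taylor2 {n : ℕ} {f : Euc n → ℝ} (hf : ContDiff ℝ 4 f) (y v : Euc n) (M : ℝ)
    (hM : ∀ t ∈ Set.Icc (0:ℝ) 1, ‖iteratedFDeriv ℝ 2 f (y + t • v)‖ ≤ M) :
    f (y + v) ≤ f y + fderiv ℝ f y v + M / 2 * ‖v‖ ^ 2 := by
  obtain ⟨t, ht, h⟩ := taylor_mean_remainder_lagrange_iteratedDeriv (f := fun s : ℝ => f (y + s • v))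
    (x := 1) (x₀ := 0) (n := 1) zero_ne_one
    ((line_contDiff hf y v).of_le (by norm_num)).contDiffOn
  rw [Set.uIoo_of_le zero_le_one] at ht
  rw [taylorWithinEval_succ, taylor_within_zero_eval, line_within hf _ _ _ (by norm_num),
    line_iter hf _ _ _ _ (by norm_num)] at h
  have h1 := iter_le _ v 2 (hM t ⟨ht.1.le, ht.2.le⟩)
  have e1 : iteratedFDeriv ℝ (0 + 1) f y (fun _ => v) = fderiv ℝ f y v :=
    iteratedFDeriv_one_apply _
  rw [e1] at h
  norm_num [Nat.factorial] at h h1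
  linarith

theorem taylor4 {n : ℕ} {f : Euc n → ℝ} (hf : ContDiff ℝ 4 f) (y v : Euc n) (M : ℝ)
    (hM : ∀ t ∈ Set.Icc (0:ℝ) 1, ‖iteratedFDeriv ℝ 4 f (y + t • v)‖ ≤ M) :
    f (y + v) ≤ f y + fderiv ℝ f y v + D2 f y v v / 2 + iteratedFDeriv ℝ 3 f y (fun _ => v) / 6
      + M / 24 * ‖v‖ ^ 4 := by
  obtain ⟨t, ht, h⟩ := taylor_mean_remainder_lagrange_iteratedDeriv (f := fun s : ℝ => f (y + s • v))
    (x := 1) (x₀ := 0) (n := 3) zero_ne_one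
    ((line_contDiff hf y v).of_le (by norm_num)).contDiffOn
  rw [Set.uIoo_of_le zero_le_one] at ht
  rw [taylorWithinEval_succ, taylorWithinEval_succ, taylorWithinEval_succ, taylor_within_zero_eval,
    line_within hf _ _ _ (by norm_num), line_within hf _ _ _ (by norm_num),
    line_within hf _ _ _ (by norm_num),
    line_iter hf _ _ _ _ (by norm_num)] at h
  have h1 := iter_le _ v 4 (hM t ⟨ht.1.le, ht.2.le⟩)
  have h2 : D2 f y v v = iteratedFDeriv ℝ 2 f y (fun _ => v) := by
    unfold D2; congr 1; ext i; fin_cases i <;> rfl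
  rw [h2]
  have e1 : iteratedFDeriv ℝ (0 + 1) f y (fun _ => v) = fderiv ℝ f y v :=
    iteratedFDeriv_one_apply _
  rw [e1] at h
  norm_num [Nat.factorial] at h h1
  linarith

theorem taylor_symm {n : ℕ} {f : Euc n → ℝ} (hf : ContDiff ℝ 4 f) (y v : Euc n) (M : ℝ)
    (hM : ∀ z : Euc n, ‖z - y‖ ≤ ‖v‖ → ‖iteratedFDeriv ℝ 4 f z‖ ≤ M) :
    f (y + v) + f (y - v) ≤ 2 * f y + D2 f y v v + M / 12 * ‖v‖ ^ 4 := by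
  have aux : ∀ w : Euc n, ‖w‖ = ‖v‖ → ∀ t ∈ Set.Icc (0:ℝ) 1,
      ‖iteratedFDeriv ℝ 4 f (y + t • w)‖ ≤ M := by
    intro w hw t ht
    apply hM
    rw [add_sub_cancel_left, norm_smul, hw, Real.norm_eq_abs, abs_of_nonneg ht.1]
    exact mul_le_of_le_one_left (norm_nonneg _) ht.2
  have h1 := taylor4 hf y v M (aux v rfl)
  have h2 := taylor4 hf y (-v) M (aux (-v) (norm_neg v))
  have e2 : D2 f y (-v) (-v) = D2 f y v v := by
    simp [D2, iteratedFDeriv_two_apply]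
  have e3 : iteratedFDeriv ℝ 3 f y (fun _ => -v) = - iteratedFDeriv ℝ 3 f y (fun _ => v) := by
    have := (iteratedFDeriv ℝ 3 f y).map_smul_univ (fun _ => (-1:ℝ)) (fun _ => v)
    norm_num at this
    exact this
  rw [e2, e3, norm_neg, map_neg, ← sub_eq_add_neg] at h2
  linarith

theorem D2_expand {n : ℕ} (f : Euc n → ℝ) (y ξ : Euc n) :
    D2 f y ξ ξ = ∑ i, ∑ j, ξ i * ξ j *
      D2 f y (EuclideanSpace.single i 1) (EuclideanSpace.single j 1) := by
  have hξ : ξ = ∑ i, ξ i • (EuclideanSpace.single i (1:ℝ) : Euc n) := by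
    ext j; simp [Pi.single_apply]
  simp only [D2, iteratedFDeriv_two_apply, Matrix.cons_val_zero, Matrix.cons_val_one]
  conv_lhs => rw [hξ]
  simp only [map_sum, map_smul, sum_apply, smul_apply,
    smul_eq_mul, Finset.mul_sum]
  rw [Finset.sum_comm]
  refine Finset.sum_congr rfl fun i _ => Finset.sum_congr rfl fun j _ => ?_
  ring

theorem D2_smul {n : ℕ} (f : Euc n → ℝ) (y ξ : Euc n) (s : ℝ) :
    D2 f y (s • ξ) (s • ξ) = s ^ 2 * D2 f y ξ ξ := by
  simp [D2, iteratedFDeriv_two_apply]; ring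

theorem D2_integrable {n : ℕ} (f : Euc n → ℝ) (y : Euc n) :
    Integrable (fun ξ => D2 f y ξ ξ) (stdGaussian n) := by
  simp_rw [D2_expand]
  exact integrable_finsetSum _ fun i _ => integrable_finsetSum _ fun j _ =>
    (gauss_coord_int n i j).mul_const _

theorem D2_integral {n : ℕ} (f : Euc n → ℝ) (y : Euc n) :
    ∫ ξ, D2 f y ξ ξ ∂(stdGaussian n) = lapl f y := by
  simp_rw [D2_expand]
  rw [integral_finsetSum _ fun i _ => integrable_finsetSum _ fun j _ =>
    (gauss_coord_int n i j).mul_const _]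
  unfold lapl
  refine Finset.sum_congr rfl fun i _ => ?_
  rw [integral_finsetSum _ fun j _ => (gauss_coord_int n i j).mul_const _]
  simp_rw [integral_mul_const, gauss_coord]
  simp

theorem D2_lip {n : ℕ} {f : Euc n → ℝ} (hf : ContDiff ℝ 4 f) (x y : Euc n) (M : ℝ)
    (hM : ∀ z : Euc n, ‖z - x‖ ≤ ‖y - x‖ → ‖iteratedFDeriv ℝ 3 f z‖ ≤ M) :
    lapl f y ≤ lapl f x + n * (M * ‖y - x‖) := by
  have h : ‖iteratedFDeriv ℝ 2 f y - iteratedFDeriv ℝ 2 f x‖ ≤ M * ‖y - x‖ := by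
    refine Convex.norm_image_sub_le_of_norm_fderiv_le (𝕜 := ℝ)
      (s := Metric.closedBall x ‖y - x‖) ?_ ?_ (convex_closedBall _ _) (by simp) (by simp [dist_eq_norm])
    · intro z _
      exact (hf.differentiable_iteratedFDeriv (m := 2) (by exact_mod_cast (by norm_num : 2 < 4))) z
    · intro z hz
      rw [norm_fderiv_iteratedFDeriv]
      exact hM z (by simpa [dist_eq_norm] using hz)
  unfold lapl
  have : (n : ℝ) * (M * ‖y - x‖) = ∑ i : Fin n, M * ‖y - x‖ := by simp
  rw [this, ← Finset.sum_add_distrib]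
  refine Finset.sum_le_sum fun i _ => ?_
  have h1 := (iteratedFDeriv ℝ 2 f y - iteratedFDeriv ℝ 2 f x).le_opNorm
    ![EuclideanSpace.single i 1, EuclideanSpace.single i 1]
  have h2 := (le_abs_self _).trans h1
  simp [Fin.prod_univ_two] at h2
  unfold D2
  linarith

theorem norm_grad {n : ℕ} (U : Euc n → ℝ) (x : Euc n) : ‖gradient U x‖ = ‖fderiv ℝ U x‖ := by
  simp [gradient]

theorem inner_grad {n : ℕ} (U : Euc n → ℝ) (x v : Euc n) :
    inner ℝ (gradient U x) v = fderiv ℝ U x v := by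
  simp [gradient, InnerProductSpace.toDual_symm_apply]

theorem U_bounds {n : ℕ} {β : ℝ} {U : Euc n → ℝ} (hU : Assumption1 n β U) :
    ∃ C > (0:ℝ), ∀ k ≤ 4, ∀ x, ‖iteratedFDeriv ℝ k U x‖ ≤ C * U x := by
  obtain ⟨C, hC, h⟩ := hU.deriv_bound
  refine ⟨max C 1, by positivity, ?_⟩
  intro k hk x
  have h1 := hU.one_le x
  have hx := h x
  simp only [sup_le_iff] at hx
  obtain ⟨⟨⟨h4, h3⟩, h2⟩, hg⟩ := hx
  have hm : C * U x ≤ max C 1 * U x := by gcongr; exact le_max_left _ _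
  have hm1 : 1 * U x ≤ max C 1 * U x := by gcongr; exact le_max_right _ _
  interval_cases k
  · rw [norm_iteratedFDeriv_zero, Real.norm_eq_abs, abs_of_nonneg (by linarith)]; linarith
  · rw [norm_iteratedFDeriv_one, ← norm_grad]; linarith
  all_goals linarith

theorem pow_bounds {n : ℕ} {β : ℝ} {U : Euc n → ℝ} (hU : Assumption1 n β U) (ℓ : ℕ) :
    ∃ A > (0:ℝ), ∀ k ≤ 4, ∀ x, ‖iteratedFDeriv ℝ k (fun z => U z ^ ℓ) x‖ ≤ A * U x ^ ℓ := by
  obtain ⟨C, hC, h⟩ := U_bounds hU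
  induction ℓ with
  | zero =>
    refine ⟨1, one_pos, fun k hk x => ?_⟩
    simp only [pow_zero]
    rcases Nat.eq_zero_or_pos k with rfl | hk0
    · simp
    · rw [iteratedFDeriv_const_of_ne hk0.ne']; simp
  | succ ℓ ih =>
    obtain ⟨A, hA, ih⟩ := ih
    refine ⟨16 * A * C, by positivity, fun k hk x => ?_⟩
    have hp := hU.one_le x
    have hk' : ((k : ℕ) : WithTop ℕ∞) ≤ 4 := by exact_mod_cast hk
    have := norm_iteratedFDeriv_mul_le (hU.smooth.pow ℓ) hU.smooth x hk'
    simp only [pow_succ]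
    refine this.trans ?_
    calc _ ≤ ∑ i ∈ Finset.range (k+1), (k.choose i : ℝ) * ((A * U x ^ ℓ) * (C * U x)) := by
          refine Finset.sum_le_sum fun i hi => ?_
          rw [mul_assoc]
          have := Finset.mem_range.1 hi
          have h1 := ih i (by omega) x
          have h2 := h (k - i) (by omega) x
          gcongr
      _ = 2 ^ k * ((A * U x ^ ℓ) * (C * U x)) := by
          rw [← Finset.sum_mul]
          congr 1
          exact_mod_cast Nat.sum_range_choose k
      _ ≤ 2 ^ 4 * ((A * U x ^ ℓ) * (C * U x)) := by
          have : 0 < U x := by linarith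
          gcongr
          norm_num
      _ = _ := by ring

theorem U_growth {n : ℕ} {β : ℝ} {U : Euc n → ℝ} (hU : Assumption1 n β U) :
    ∃ C > (0:ℝ), (∀ x, ‖gradient U x‖ ≤ C * U x) ∧
      ∀ x y, U y ≤ U x * Real.exp (C * ‖y - x‖) := by
  obtain ⟨C, hC, h⟩ := U_bounds hU
  have hg : ∀ x, ‖fderiv ℝ U x‖ ≤ C * U x := fun x => by
    rw [← norm_iteratedFDeriv_one]; exact h 1 (by norm_num) x
  refine ⟨C, hC, fun x => by rw [norm_grad]; exact hg x, fun x y => ?_⟩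
  have hpos : ∀ x, 0 < U x := fun x => by linarith [hU.one_le x]
  have hd : Differentiable ℝ U := hU.smooth.differentiable (by norm_num)
  have key : ‖Real.log (U y) - Real.log (U x)‖ ≤ C * ‖y - x‖ := by
    refine Convex.norm_image_sub_le_of_norm_fderiv_le (𝕜 := ℝ) (f := fun z => Real.log (U z))
      (s := Set.univ) ?_ ?_ convex_univ (by simp) (by simp)
    · intro z _; exact (hd z).log (hpos z).ne'
    · intro z _
      rw [fderiv.log (hd z) (hpos z).ne', norm_smul, norm_inv, Real.norm_eq_abs,
        abs_of_pos (hpos z), inv_mul_le_iff₀ (hpos z)]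
      linarith [hg z]
  have := (le_abs_self _).trans key
  rw [← Real.log_le_log_iff (hpos y) (by have := hpos x; positivity),
    Real.log_mul (hpos x).ne' (Real.exp_pos _).ne', Real.log_exp]
  linarith

theorem fderiv_U_pow {n : ℕ} {β : ℝ} {U : Euc n → ℝ} (hU : Assumption1 n β U) (ℓ : ℕ) :
    fderiv ℝ (fun z => U z ^ ℓ) = fun x => ((ℓ : ℝ) * U x ^ (ℓ - 1)) • fderiv ℝ U x := by
  have hd : Differentiable ℝ U := hU.smooth.differentiable (by norm_num)
  ext1 x
  rw [((hd x).hasFDerivAt.pow ℓ).fderiv]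
  simp

theorem lapl_pow {n : ℕ} {β : ℝ} {U : Euc n → ℝ} (hU : Assumption1 n β U) (ℓ : ℕ) (x : Euc n) :
    lapl (fun z => U z ^ ℓ) x = ℓ * U x ^ (ℓ - 1) * lapl U x
      + ℓ * ((ℓ - 1 : ℕ) * U x ^ (ℓ - 1 - 1)) * ‖gradient U x‖ ^ 2 := by
  have hd : Differentiable ℝ U := hU.smooth.differentiable (by norm_num)
  have hd2 : Differentiable ℝ (fderiv ℝ U) := 
    (hU.smooth.fderiv_right (m := 3) (by norm_num)).differentiable (by norm_num)
  have hc : HasFDerivAt (fun x => (ℓ : ℝ) * U x ^ (ℓ - 1))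
      ((ℓ : ℝ) • (((ℓ - 1 : ℕ) * U x ^ (ℓ - 1 - 1)) • fderiv ℝ U x)) x := by
    have := ((hd x).hasFDerivAt.pow (ℓ - 1)).const_mul (ℓ : ℝ)
    simpa using this
  have hs := (hc.smul (hd2 x).hasFDerivAt).fderiv
  have hn : ‖gradient U x‖ ^ 2 = ∑ i : Fin n, (fderiv ℝ U x (EuclideanSpace.single i 1)) ^ 2 := by
    rw [EuclideanSpace.real_norm_sq_eq]
    refine Finset.sum_congr rfl fun i _ => ?_
    rw [← inner_grad, EuclideanSpace.inner_single_right]; simp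
  rw [hn]
  unfold lapl
  rw [Finset.mul_sum, Finset.mul_sum, ← Finset.sum_add_distrib]
  refine Finset.sum_congr rfl fun i _ => ?_
  have hs' : fderiv ℝ (fderiv ℝ (fun z => U z ^ ℓ)) x =
      (↑ℓ * U x ^ (ℓ - 1)) • fderiv ℝ (fderiv ℝ U) x +
      ((ℓ:ℝ) • (((ℓ - 1 : ℕ):ℝ) * U x ^ (ℓ - 1 - 1)) • fderiv ℝ U x).smulRight (fderiv ℝ U x) := by
    rw [fderiv_U_pow hU]; exact hs
  simp only [D2, iteratedFDeriv_two_apply, hs']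
  simp
  ring

theorem lapl_le {n : ℕ} (f : Euc n → ℝ) (x : Euc n) (M : ℝ) (h : ‖iteratedFDeriv ℝ 2 f x‖ ≤ M) :
    lapl f x ≤ n * M := by
  have : (n : ℝ) * M = ∑ i : Fin n, M := by simp
  unfold lapl
  rw [this]
  refine Finset.sum_le_sum fun i _ => ?_
  have h1 := (iteratedFDeriv ℝ 2 f x).le_opNorm
    ![EuclideanSpace.single i 1, EuclideanSpace.single i 1]
  have h2 := (le_abs_self _).trans h1
  simp [Fin.prod_univ_two] at h2
  unfold D2
  linarith

theorem drift {n : ℕ} {β : ℝ} (hβ : 0 < β) {U : Euc n → ℝ} (hU : Assumption1 n β U) (ℓ : ℕ) :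
    ∃ γ > (0:ℝ), ∃ K > (0:ℝ), ∀ x,
      -(ℓ * U x ^ (ℓ - 1) * ‖gradient U x‖ ^ 2) + β⁻¹ * lapl (fun z => U z ^ ℓ) x
        ≤ -γ * U x ^ ℓ + K := by
  rcases ℓ with _ | m
  · refine ⟨1, one_pos, 1, one_pos, fun x => ?_⟩
    rw [lapl_pow hU]; simp
  obtain ⟨A, hA, hAb⟩ := pow_bounds hU (m+1)
  have hc := hU.c_lt
  have hd := hU.d_pos
  set E0 : ℝ := max (max hU.EB 1) (m / (β - hU.c)) with hE0
  have hE1 : 1 ≤ E0 := (le_max_right _ _).trans (le_max_left _ _)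
  refine ⟨β⁻¹ * hU.d, by positivity, (β⁻¹ * hU.d + β⁻¹ * (n * A)) * E0 ^ (m+1), by positivity, ?_⟩
  intro x
  have h1 := hU.one_le x
  have hp : 0 < U x := by linarith
  by_cases hx : U x ≤ E0
  · have hl := lapl_le _ x _ (hAb 2 (by norm_num) x)
    have h3 : U x ^ (m+1) ≤ E0 ^ (m+1) := by gcongr
    have h4 : β⁻¹ * lapl (fun z => U z ^ (m+1)) x ≤ β⁻¹ * (n * (A * U x ^ (m+1))) := by gcongr
    have h5 : 0 ≤ ((m+1 : ℕ):ℝ) * U x ^ (m + 1 - 1) * ‖gradient U x‖ ^ 2 := by positivity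
    have h6 : (β⁻¹ * hU.d + β⁻¹ * (n * A)) * U x ^ (m+1) ≤
      (β⁻¹ * hU.d + β⁻¹ * (n * A)) * E0 ^ (m+1) := by gcongr
    linarith
  · push Not at hx
    have hEB : hU.EB < U x := lt_of_le_of_lt ((le_max_left _ _).trans (le_max_left _ _)) hx
    have hm : (m:ℝ) / (β - hU.c) < U x := lt_of_le_of_lt (le_max_right _ _) hx
    rw [div_lt_iff₀ (by linarith)] at hm
    have hdr := hU.driftB x hEB
    rw [lapl_pow hU]
    simp only [Nat.add_sub_cancel]
    set G := ‖gradient U x‖ ^ 2 with hG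
    have hG0 : 0 ≤ G := by positivity
    -- m * U^(m-1) ≤ (β - c) U^m
    have hq : (m:ℝ) * U x ^ (m-1) ≤ (β - hU.c) * U x ^ m := by
      rcases m with _ | k
      · simp; linarith
      · simp only [Nat.add_sub_cancel, pow_succ]
        have : 0 < U x ^ k := by positivity
        nlinarith
    have hK : 0 ≤ (β⁻¹ * hU.d + β⁻¹ * (n * A)) * E0 ^ (m+1) := by positivity
    have hkey : -(β * (((m+1:ℕ):ℝ) * U x ^ m * G)) + (((m+1:ℕ):ℝ) * U x ^ m * lapl U x +
        ((m+1:ℕ):ℝ) * ((m:ℝ) * U x ^ (m-1)) * G) ≤ - hU.d * U x ^ (m+1) := by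
      have a1 : ((m+1:ℕ):ℝ) * U x ^ m * lapl U x ≤ ((m+1:ℕ):ℝ) * U x ^ m * (hU.c * G - hU.d * U x) := by
        gcongr
      have a2 : ((m+1:ℕ):ℝ) * ((m:ℝ) * U x ^ (m-1)) * G ≤
          ((m+1:ℕ):ℝ) * ((β - hU.c) * U x ^ m) * G := by gcongr
      have a3 : 0 ≤ (m:ℝ) * (hU.d * U x ^ (m+1)) := by positivity
      push_cast at *
      rw [pow_succ] at *
      nlinarith
    have hkey2 := mul_le_mul_of_nonneg_left hkey (inv_pos.2 hβ).le
    have : β⁻¹ * (β * (((m+1:ℕ):ℝ) * U x ^ m * G)) = ((m+1:ℕ):ℝ) * U x ^ m * G := by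
      field_simp
    linarith

set_option maxHeartbeats 1000000

/-- Local drift condition for forward Euler. -/
theorem euler_local_drift (n : ℕ) (β : ℝ) (hβ : 0 < β)
    (U : Euc n → ℝ) (hU : Assumption1 n β U) (ℓ : ℕ) :
    ∃ γ > (0:ℝ), ∃ K > (0:ℝ), ∃ C > (0:ℝ), ∀ h : ℝ, 0 < h → h < 1 →
      ∀ x : Euc n, U x < h ^ (-(1:ℝ)/2) →
        (∫ ξ, U (x - h • gradient U x + Real.sqrt (2 * β⁻¹ * h) • ξ) ^ ℓ ∂(stdGaussian n))
          ≤ (exp (-γ * h) + C * U x ^ 2 * h ^ 2) * U x ^ ℓ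
            + (K / γ) * (1 - exp (-γ * h)) := by
  obtain ⟨A, hA, hAb⟩ := pow_bounds hU ℓ
  obtain ⟨C, hC, hgrad, hgrow⟩ := U_growth hU
  obtain ⟨γ, hγ, K, hK, hdrift⟩ := drift hβ hU ℓ
  set s : ℝ := Real.sqrt (2 * β⁻¹) with hs
  set B : ℝ := Real.exp (C * C) ^ ℓ with hB
  set a : ℝ := ℓ * (C * s) with ha
  set M : ℝ := ∫ ξ : Euc n, ‖ξ‖ ^ 4 * Real.exp (a * ‖ξ‖) ∂(stdGaussian n) with hM
  have hM0 : 0 ≤ M := integral_nonneg fun ξ => by positivity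
  have hB0 : 0 < B := by positivity
  have hpow : ContDiff ℝ 4 (fun z => U z ^ ℓ) := hU.smooth.pow ℓ
  refine ⟨γ, hγ, K * Real.exp γ, by positivity,
    A * B * C ^ 2 / 2 + A * B * β⁻¹ ^ 2 * M / 6 + β⁻¹ * (n * (A * B * C)), by positivity, ?_⟩
  intro h h0 h1 x hx
  have hone := hU.one_le x
  have hUpos : ∀ z, 0 < U z := fun z => by linarith [hU.one_le z]
  set V := U x with hV
  have hVp : 0 < V := hUpos x
  -- `h V² ≤ 1`
  have hV2 : h * V ^ 2 ≤ 1 := by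
    have h2 : V ^ 2 ≤ (h ^ (-(1:ℝ)/2)) ^ 2 := by gcongr
    have h3 : (h ^ (-(1:ℝ)/2)) ^ 2 = h⁻¹ := by
      rw [← Real.rpow_natCast, ← Real.rpow_mul h0.le, ← Real.rpow_neg_one]
      norm_num
    rw [h3] at h2
    calc h * V ^ 2 ≤ h * h⁻¹ := by gcongr
      _ = 1 := mul_inv_cancel₀ h0.ne'
  have hVV : V ≤ V ^ 2 := by nlinarith
  have hV1 : h * V ≤ 1 := (mul_le_mul_of_nonneg_left hVV h0.le).trans hV2
  set y := x - h • gradient U x with hy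
  have hyx : ‖y - x‖ ≤ h * (C * V) := by
    rw [hy, sub_sub_cancel_left, norm_neg, norm_smul, Real.norm_eq_abs, abs_of_pos h0]
    gcongr; exact hgrad x
  have hyx1 : ‖y - x‖ ≤ C := hyx.trans (by nlinarith)
  -- growth near `x`
  have hnear : ∀ z : Euc n, ‖z - x‖ ≤ ‖y - x‖ → U z ^ ℓ ≤ B * V ^ ℓ := by
    intro z hz
    rw [hB, ← mul_pow]
    have : U z ≤ Real.exp (C * C) * V := by
      refine (hgrow x z).trans ?_
      rw [mul_comm]
      gcongr
      exact hz.trans hyx1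
    have := (hUpos z).le
    gcongr
  have hyB : U y ^ ℓ ≤ B * V ^ ℓ := hnear y le_rfl
  set σ := Real.sqrt (2 * β⁻¹ * h) with hσ
  have hσ0 : 0 ≤ σ := Real.sqrt_nonneg _
  have hσ2 : σ ^ 2 = 2 * β⁻¹ * h := Real.sq_sqrt (by positivity)
  have hσs : σ ≤ s := by
    apply Real.sqrt_le_sqrt
    have : 0 < β⁻¹ := by positivity
    nlinarith
  -- growth near `y`
  have hfar : ∀ (ξ z : Euc n), ‖z - y‖ ≤ ‖σ • ξ‖ → U z ^ ℓ ≤ B * V ^ ℓ * Real.exp (a * ‖ξ‖) := by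
    intro ξ z hz
    have e1 : U z ≤ U y * Real.exp (C * (s * ‖ξ‖)) := by
      refine (hgrow y z).trans ?_
      have := hUpos y
      gcongr
      refine hz.trans ?_
      rw [norm_smul, Real.norm_eq_abs, abs_of_nonneg hσ0]
      gcongr
    have e2 : U z ^ ℓ ≤ (U y * Real.exp (C * (s * ‖ξ‖))) ^ ℓ := by
      have := (hUpos z).le
      gcongr
    refine e2.trans ?_
    rw [mul_pow, ← Real.exp_nat_mul]
    have e3 : (ℓ:ℝ) * (C * (s * ‖ξ‖)) = a * ‖ξ‖ := by rw [ha]; ring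
    rw [e3]
    gcongr
  have hcont : Continuous U := hU.smooth.continuous
  have hintg : ∀ τ : ℝ, |τ| = σ → Integrable (fun ξ => U (y + τ • ξ) ^ ℓ) (stdGaussian n) := by
    intro τ hτ
    refine ((gauss_exp n a).const_mul (B * V ^ ℓ)).mono' (by fun_prop)
      (Filter.Eventually.of_forall fun ξ => ?_)
    rw [Real.norm_eq_abs, abs_of_pos (pow_pos (hUpos _) _)]
    apply hfar ξ
    rw [add_sub_cancel_left, norm_smul, norm_smul, Real.norm_eq_abs, hτ, Real.norm_eq_abs,
      abs_of_nonneg hσ0]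
  have hi1 := hintg σ (abs_of_nonneg hσ0)
  have hi2 := hintg (-σ) (by rw [abs_neg, abs_of_nonneg hσ0])
  -- pointwise symmetric Taylor
  have hpt : ∀ ξ : Euc n, U (y + σ • ξ) ^ ℓ + U (y + (-σ) • ξ) ^ ℓ ≤
      2 * U y ^ ℓ + (2 * β⁻¹ * h) * D2 (fun z => U z ^ ℓ) y ξ ξ
        + (A * B * V ^ ℓ / 12 * (2 * β⁻¹ * h) ^ 2) * (‖ξ‖ ^ 4 * Real.exp (a * ‖ξ‖)) := by
    intro ξ
    have := taylor_symm hpow y (σ • ξ) (A * (B * V ^ ℓ * Real.exp (a * ‖ξ‖))) (by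
      intro z hz
      refine (hAb 4 le_rfl z).trans ?_
      gcongr
      exact hfar ξ z hz)
    rw [D2_smul, norm_smul, Real.norm_eq_abs, abs_of_nonneg hσ0, sub_eq_add_neg, ← neg_smul,
      hσ2] at this
    refine this.trans (le_of_eq ?_)
    rw [← hσ2]; ring
  have hI : ∫ ξ, U (y + σ • ξ) ^ ℓ ∂(stdGaussian n) + ∫ ξ, U (y + (-σ) • ξ) ^ ℓ ∂(stdGaussian n)
      ≤ 2 * U y ^ ℓ + (2 * β⁻¹ * h) * lapl (fun z => U z ^ ℓ) y
        + (A * B * V ^ ℓ / 12 * (2 * β⁻¹ * h) ^ 2) * M := by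
    rw [← integral_add hi1 hi2]
    have j1 : Integrable (fun _ : Euc n => 2 * U y ^ ℓ) (stdGaussian n) := integrable_const _
    have j2 := (D2_integrable (fun z => U z ^ ℓ) y).const_mul (2 * β⁻¹ * h)
    have j3 := (gauss_exp4 n a).const_mul (A * B * V ^ ℓ / 12 * (2 * β⁻¹ * h) ^ 2)
    refine (integral_mono (hi1.add hi2) ((j1.add j2).add j3) hpt).trans (le_of_eq ?_)
    rw [integral_add' (j1.add j2) j3, integral_add' j1 j2, integral_const, integral_const_mul, integral_const_mul,
      D2_integral, ← hM]
    simp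
  have hsym : ∫ ξ, U (y + (-σ) • ξ) ^ ℓ ∂(stdGaussian n) = ∫ ξ, U (y + σ • ξ) ^ ℓ ∂(stdGaussian n) := by
    rw [← gauss_symm]
    simp
  rw [hsym] at hI
  set I := ∫ ξ, U (y + σ • ξ) ^ ℓ ∂(stdGaussian n) with hIdef
  -- first-order step
  have hstep : U y ^ ℓ ≤ V ^ ℓ - h * (ℓ * V ^ (ℓ - 1) * ‖gradient U x‖ ^ 2)
      + A * (B * V ^ ℓ) / 2 * (h * (C * V)) ^ 2 := by
    have ht := taylor2 hpow x (y - x) (A * (B * V ^ ℓ)) (by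
      intro t ht
      refine (hAb 2 (by norm_num) _).trans ?_
      gcongr
      apply hnear
      rw [add_sub_cancel_left, norm_smul, Real.norm_eq_abs, abs_of_nonneg ht.1]
      exact mul_le_of_le_one_left (norm_nonneg _) ht.2)
    rw [add_sub_cancel, fderiv_U_pow hU] at ht
    have e : fderiv ℝ U x (y - x) = - (h * ‖gradient U x‖ ^ 2) := by
      rw [← inner_grad, hy, sub_sub_cancel_left, inner_neg_right, inner_smul_right,
        real_inner_self_eq_norm_sq]
    simp only [smul_apply, smul_eq_mul, e] at ht
    have : A * (B * V ^ ℓ) / 2 * ‖y - x‖ ^ 2 ≤ A * (B * V ^ ℓ) / 2 * (h * (C * V)) ^ 2 := by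
      gcongr
    linarith
  have hlap : lapl (fun z => U z ^ ℓ) y ≤ lapl (fun z => U z ^ ℓ) x
      + n * (A * (B * V ^ ℓ) * (h * (C * V))) := by
    refine (D2_lip hpow x y (A * (B * V ^ ℓ)) ?_).trans ?_
    · intro z hz
      refine (hAb 3 (by norm_num) _).trans ?_
      gcongr
      exact hnear z hz
    · gcongr
  have hdx := hdrift x
  have hmain : I ≤ V ^ ℓ + h * (-γ * V ^ ℓ + K) +
      (A * B * C ^ 2 / 2 + A * B * β⁻¹ ^ 2 * M / 6 + β⁻¹ * (n * (A * B * C))) * V ^ 2 * h ^ 2 * V ^ ℓ := by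
    have b0 : (0:ℝ) < β⁻¹ := by positivity
    have c1 := mul_le_mul_of_nonneg_left hlap (by positivity : 0 ≤ β⁻¹ * h)
    have c2 := mul_le_mul_of_nonneg_left hdx h0.le
    have c3 : A * B * β⁻¹ ^ 2 * M / 6 * h ^ 2 * V ^ ℓ * 1 ≤
        A * B * β⁻¹ ^ 2 * M / 6 * h ^ 2 * V ^ ℓ * V ^ 2 := by
      gcongr
      exact one_le_pow₀ hone
    have c4 : β⁻¹ * (n * (A * B * C)) * h ^ 2 * V ^ ℓ * V ≤
        β⁻¹ * (n * (A * B * C)) * h ^ 2 * V ^ ℓ * V ^ 2 := by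
      gcongr
    linarith
  have hexp1 : 1 - γ * h ≤ Real.exp (-γ * h) := by
    have := Real.add_one_le_exp (-γ * h); linarith
  have hexp2 : h * γ ≤ Real.exp γ * (1 - Real.exp (-γ * h)) := by
    have e1 := Real.add_one_le_exp (γ * h)
    have e2 : Real.exp (-γ * h) * Real.exp (γ * h) = 1 := by
      rw [← Real.exp_add]; simp
    have e3 : Real.exp (γ * h) ≤ Real.exp γ := Real.exp_le_exp.2 (by nlinarith)
    have e4 : Real.exp (-γ * h) ≤ 1 := Real.exp_le_one_iff.2 (by nlinarith)
    nlinarith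
  have hKh : h * K ≤ K * Real.exp γ / γ * (1 - Real.exp (-γ * h)) := by
    rw [div_mul_eq_mul_div, le_div_iff₀ hγ]
    nlinarith
  have hfin : (1 - γ * h) * V ^ ℓ ≤ Real.exp (-γ * h) * V ^ ℓ := by gcongr
  linarith

end
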